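/- Let S be an n×n complex Hermitian positive semidefinite matrix and fix γ ≥ 0. Then the map c ↦ Real.log((det(I + γ·S)).re) − Real.log((det(I + (γ/(cγ+1))·S)).re) is monotone nondecreasing on [0, ∞); that is, the capacity loss of the grouped subcarrier is nondecreasing in the CSI-difference variance parameter c, so larger CSI difference (hence larger subcarrier group size) incurs greater capacity loss. -/

import Mathlib

open ComplexOrder

/-!
In an eigenbasis of `S`, `det (I + tS) = ∏ᵢ (1 + tλᵢ)` with all `λᵢ ≥ 0`, so the capacity increases
with the SNR `t ≥ 0`. Increasing `c` lowers the equivalent SNR `γ / (cγ + 1)`, hence the capacity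
that is subtracted in the loss.
-/

section Capacity

variable {𝕜 m : Type*} [RCLike 𝕜] [Fintype m] [DecidableEq m] {S : Matrix m m 𝕜}

theorem det_one_add_smul_eq_prod_eigenvalues (hS : S.IsHermitian) (t : 𝕜) :
    (1 + t • S).det = ∏ i, (1 + t * (hS.eigenvalues i : 𝕜)) := by
  set D : Matrix m m 𝕜 := Matrix.diagonal (RCLike.ofReal ∘ hS.eigenvalues)
  set φ := Unitary.conjStarAlgAut 𝕜 _ hS.eigenvectorUnitary
  have hφ : 1 + t • S = φ (1 + t • D) := by
    rw [map_add, map_one, map_smul, ← hS.spectral_theorem]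
  have hD : 1 + t • D = Matrix.diagonal fun i ↦ 1 + t * (hS.eigenvalues i : 𝕜) := by
    rw [← Matrix.diagonal_one, ← Matrix.diagonal_smul, Matrix.diagonal_add]
    rfl
  rw [hφ, Unitary.conjStarAlgAut_apply, Matrix.det_mul_right_comm,
    Unitary.mul_star_self_of_mem hS.eigenvectorUnitary.2, one_mul, hD, Matrix.det_diagonal]

theorem re_det_one_add_smul_eq_prod_eigenvalues (hS : S.IsHermitian) (t : ℝ) :
    RCLike.re (1 + (t : 𝕜) • S).det = ∏ i, (1 + t * hS.eigenvalues i) := by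
  rw [det_one_add_smul_eq_prod_eigenvalues hS]
  exact_mod_cast RCLike.ofReal_re (K := 𝕜) (∏ i, (1 + t * hS.eigenvalues i))

theorem re_det_one_add_smul_pos (hS : S.PosSemidef) {t : ℝ} (ht : 0 ≤ t) :
    0 < RCLike.re (1 + (t : 𝕜) • S).det := by
  have hpos : (1 + (t : 𝕜) • S).PosDef :=
    Matrix.PosDef.one.add_posSemidef (hS.smul (RCLike.ofReal_nonneg.2 ht))
  exact (RCLike.pos_iff.1 hpos.det_pos).1

theorem monotoneOn_re_det_one_add_smul (hS : S.PosSemidef) :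
    MonotoneOn (fun t : ℝ ↦ RCLike.re (1 + (t : 𝕜) • S).det) (Set.Ici 0) := by
  intro s (hs : 0 ≤ s) t _ hst
  have hev : ∀ i, 0 ≤ hS.isHermitian.eigenvalues i := hS.eigenvalues_nonneg
  simp only [re_det_one_add_smul_eq_prod_eigenvalues hS.isHermitian]
  gcongr with i
  · exact fun i _ ↦ add_nonneg zero_le_one (mul_nonneg hs (hev i))
  · exact hev i

variable (S) in
/-- The capacity of a MIMO channel with Gram matrix `S` at SNR `t`, measured in nats. The real part
loses nothing in the intended case of Hermitian `S`, where the determinant is real. -/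
noncomputable def mimoCapacity (t : ℝ) : ℝ :=
  Real.log (RCLike.re (1 + (t : 𝕜) • S).det)

theorem monotoneOn_mimoCapacity (hS : S.PosSemidef) :
    MonotoneOn (mimoCapacity S) (Set.Ici 0) := fun _ hs _ ht hst ↦
  Real.log_le_log (re_det_one_add_smul_pos hS hs) (monotoneOn_re_det_one_add_smul hS hs ht hst)

/-- The equivalent SNR `γₑ(γ)` of a grouped subcarrier, where `c` is the CSI-difference variance
parameter. It is meaningful only where `c * γ + 1 ≠ 0`. -/
noncomputable def equivalentSNR (c γ : ℝ) : ℝ :=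
  γ / (c * γ + 1)

theorem equivalentSNR_nonneg {c γ : ℝ} (hγ : 0 ≤ γ) (hc : 0 < c * γ + 1) :
    0 ≤ equivalentSNR c γ :=
  div_nonneg hγ hc.le

theorem antitoneOn_equivalentSNR {γ : ℝ} (hγ : 0 ≤ γ) :
    AntitoneOn (equivalentSNR · γ) {c | 0 < c * γ + 1} := by
  intro a (ha : 0 < a * γ + 1) b _ hab
  change γ / (b * γ + 1) ≤ γ / (a * γ + 1)
  gcongr

theorem capacity_loss_monotone_in_variance_general (hS : S.PosSemidef) {γ : ℝ} (hγ : 0 ≤ γ) :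
    MonotoneOn (fun c ↦ mimoCapacity S γ - mimoCapacity S (equivalentSNR c γ))
      {c | 0 < c * γ + 1} := by
  intro a ha b hb hab
  have hSNR : equivalentSNR b γ ≤ equivalentSNR a γ := antitoneOn_equivalentSNR hγ ha hb hab
  exact sub_le_sub_left (monotoneOn_mimoCapacity hS (equivalentSNR_nonneg hγ hb)
    (equivalentSNR_nonneg hγ ha) hSNR) _

end Capacity

/-- For fixed SNR `γ ≥ 0`, the capacity loss
`c ↦ log (det (I + γ • S)).re − log (det (I + (γ/(cγ+1)) • S)).re`
is monotone nondecreasing in the CSI-difference variance parameter `c` on `[0, ∞)`. -/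
theorem capacity_loss_monotone_in_variance
    {n : ℕ} (S : Matrix (Fin n) (Fin n) ℂ)
    (hHerm : S.IsHermitian) (hS : S.PosSemidef)
    (γ : ℝ) (hγ : 0 ≤ γ) :
    MonotoneOn
      (fun c : ℝ =>
        Real.log ((Matrix.det (1 + (γ : ℂ) • S)).re) -
          Real.log ((Matrix.det (1 + ((γ / (c * γ + 1) : ℝ) : ℂ) • S)).re))
      (Set.Ici (0 : ℝ)) :=
  (capacity_loss_monotone_in_variance_general hS hγ).mono fun _ hc ↦
    add_pos_of_nonneg_of_pos (mul_nonneg hc hγ) one_pos
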